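/- Let σ : ℕ → ℕ (where ℕ = {1, 2, 3, …}) be a surjective map with the property that for every realizable sequence (a_n)_{n≥1}, the sequence (a_{σ(n)})_{n≥1} is also realizable. Then σ(n) = n for every n ≥ 1. -/

import Mathlib

/-- A sequence of non-negative integers is realizable if for every `n ≥ 1` the Möbius
sum `∑_{d ∣ n} μ(n/d)·a d` is non-negative and divisible by `n`. -/
def Realizable (x : ℕ → ℕ) : Prop :=
  ∀ n : ℕ, 1 ≤ n →
    0 ≤ (∑ d ∈ n.divisors, ArithmeticFunction.moebius (n / d) * (x d : ℤ)) ∧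
    (n : ℤ) ∣ ∑ d ∈ n.divisors, ArithmeticFunction.moebius (n / d) * (x d : ℤ)

/-!
For each `k`, the sequence counting the fixed points of the iterates of a single `k`-cycle, namely
`k` at the multiples of `k` and `0` elsewhere, is realizable, so its time-change by `σ` is too. A
realizable sequence is monotone along divisibility; for the time-change with `k = σ d` this says
that `d ∣ n` implies `σ d ∣ σ n`. Hence if `m` is the least preimage of `k`, then `k ∤ σ d` for
every proper divisor `d` of `m`, so in the time-changed system all `k` points fixed by the `m`-th
iterate have least period `m`, and `m ∣ k`. Thus every `k` is the image of one of its divisors, and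
strong induction forces that divisor to be `k` itself.
-/

open Finset

lemma sum_divisors_eq_iff_sum_moebius_mul_eq {R : Type*} [NonAssocRing R] {f g : ℕ → R} :
    (∀ n > 0, ∑ d ∈ n.divisors, f d = g n) ↔
      ∀ n > 0, ∑ d ∈ n.divisors, (ArithmeticFunction.moebius (n / d) : R) * g d = f n := by
  simp only [ArithmeticFunction.sum_eq_iff_sum_mul_moebius_eq,
    Nat.sum_divisorsAntidiagonal' fun i j => (ArithmeticFunction.moebius i : R) * g j]

lemma nonneg_and_natCast_dvd_iff {n : ℕ} {s : ℤ} :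
    0 ≤ s ∧ (n : ℤ) ∣ s ↔ ∃ c : ℕ, s = (n * c : ℕ) := by
  constructor
  · rintro ⟨hs, hns⟩
    lift s to ℕ using hs
    obtain ⟨c, rfl⟩ := Int.natCast_dvd_natCast.mp hns
    exact ⟨c, rfl⟩
  · rintro ⟨c, rfl⟩
    exact ⟨Int.natCast_nonneg _, Int.natCast_dvd_natCast.mpr (dvd_mul_right n c)⟩

/-- The witness `c` counts closed orbits: `c d` is the number of orbits of length `d`. -/
lemma realizable_iff_exists_sum_divisors {x : ℕ → ℕ} :
    Realizable x ↔ ∃ c : ℕ → ℕ, ∀ n > 0, ∑ d ∈ n.divisors, d * c d = x n := by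
  have moebius_inversion (c : ℕ → ℕ) :
      (∀ n > 0, ∑ d ∈ n.divisors, d * c d = x n) ↔ ∀ n > 0,
        ∑ d ∈ n.divisors, ArithmeticFunction.moebius (n / d) * (x d : ℤ) = (n * c n : ℕ) := by
    exact_mod_cast sum_divisors_eq_iff_sum_moebius_mul_eq (R := ℤ)
      (f := fun n => (n * c n : ℕ)) (g := fun n => x n)
  simp only [moebius_inversion]
  constructor
  · intro hx
    choose! c hc using fun n hn => nonneg_and_natCast_dvd_iff.mp (hx n hn)
    exact ⟨c, hc⟩
  · rintro ⟨c, hc⟩ n hn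
    exact nonneg_and_natCast_dvd_iff.mpr ⟨c n, hc n hn⟩

namespace Realizable

variable {x : ℕ → ℕ} {d n : ℕ}

lemma apply_le_apply_of_dvd (hx : Realizable x) (hn : n ≠ 0) (hdn : d ∣ n) : x d ≤ x n := by
  obtain ⟨c, hc⟩ := realizable_iff_exists_sum_divisors.mp hx
  rw [← hc d (Nat.pos_of_dvd_of_pos hdn hn.pos), ← hc n hn.pos]
  exact sum_le_sum_of_subset (Nat.divisors_subset_of_dvd hn hdn)

lemma dvd_apply_of_properDivisors_eq_zero (hx : Realizable x) (hn : n ≠ 0)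
    (hzero : ∀ d ∈ n.properDivisors, x d = 0) : n ∣ x n := by
  have hdvd := (hx n hn.pos).2
  rw [← Nat.cons_self_properDivisors hn, sum_cons,
    sum_eq_zero fun d hd => by rw [hzero d hd, Nat.cast_zero, mul_zero]] at hdvd
  simpa [Nat.div_self hn.pos, Int.natCast_dvd_natCast] using hdvd

end Realizable

/-- The number of points fixed by the `n`-th iterate of a cyclic permutation of `k` points: the
realizable sequence of a single closed orbit of length `k`, used to test a time-change. For `k = 0`
it is the zero sequence, that of the empty system. -/
def cycleFixedPoints (k n : ℕ) : ℕ :=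
  if k ∣ n then k else 0

lemma realizable_cycleFixedPoints (k : ℕ) : Realizable (cycleFixedPoints k) := by
  refine realizable_iff_exists_sum_divisors.mpr ⟨fun d => if k = d then 1 else 0, fun n hn => ?_⟩
  simp [cycleFixedPoints, hn.ne']

section TimeChange

variable {σ : ℕ → ℕ} {d k m n : ℕ}

lemma dvd_apply_of_dvd_apply_of_dvd (hk : k ≠ 0)
    (hσ : Realizable fun n => cycleFixedPoints k (σ n)) (hn : n ≠ 0) (hdn : d ∣ n)
    (hkd : k ∣ σ d) : k ∣ σ n := by
  by_contra hkn
  have hle : cycleFixedPoints k (σ d) ≤ cycleFixedPoints k (σ n) :=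
    hσ.apply_le_apply_of_dvd hn hdn
  rw [cycleFixedPoints, cycleFixedPoints, if_pos hkd, if_neg hkn] at hle
  exact hk (Nat.le_zero.mp hle)

lemma dvd_apply_of_properDivisors_ne (hpos : ∀ n, 1 ≤ n → 1 ≤ σ n)
    (hσ : ∀ k, Realizable fun n => cycleFixedPoints k (σ n)) (hm : m ≠ 0)
    (hne : ∀ d ∈ m.properDivisors, σ d ≠ σ m) : m ∣ σ m := by
  have hzero : ∀ d ∈ m.properDivisors, cycleFixedPoints (σ m) (σ d) = 0 := by
    intro d hd
    have hdm : d ∣ m := (Nat.mem_properDivisors.mp hd).1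
    have hσd_ne : σ d ≠ 0 :=
      Nat.one_le_iff_ne_zero.mp (hpos d (Nat.pos_of_mem_properDivisors hd))
    have hσd : σ d ∣ σ m :=
      dvd_apply_of_dvd_apply_of_dvd hσd_ne (hσ (σ d)) hm hdm dvd_rfl
    exact if_neg fun hσm => hne d hd (Nat.dvd_antisymm hσd hσm)
  simpa [cycleFixedPoints] using (hσ (σ m)).dvd_apply_of_properDivisors_eq_zero hm hzero

lemma exists_dvd_apply_eq (hpos : ∀ n, 1 ≤ n → 1 ≤ σ n)
    (hσ : ∀ k, Realizable fun n => cycleFixedPoints k (σ n)) (hk : ∃ n, 1 ≤ n ∧ σ n = k) :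
    ∃ m, 1 ≤ m ∧ m ∣ k ∧ σ m = k := by
  obtain ⟨hm, hmk⟩ := Nat.find_spec hk
  refine ⟨Nat.find hk, hm, ?_, hmk⟩
  have hdvd := dvd_apply_of_properDivisors_ne hpos hσ (Nat.one_le_iff_ne_zero.mp hm)
    fun d hd hdm => Nat.find_min hk (Nat.mem_properDivisors.mp hd).2
      ⟨Nat.pos_of_mem_properDivisors hd, hdm.trans hmk⟩
  rwa [hmk] at hdvd

end TimeChange

/-- The only surjective self-map of `{1, 2, 3, …}` which preserves realizability of
sequences under time-change is the identity. -/
theorem surjective_realizability_preserving_time_change_is_id (σ : ℕ → ℕ)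
    (hpos : ∀ n : ℕ, 1 ≤ n → 1 ≤ σ n)
    (hsurj : ∀ m : ℕ, 1 ≤ m → ∃ n : ℕ, 1 ≤ n ∧ σ n = m)
    (hpres : ∀ a : ℕ → ℕ, Realizable a → Realizable (fun n => a (σ n))) :
    ∀ n : ℕ, 1 ≤ n → σ n = n := by
  have hσ (k : ℕ) : Realizable fun n => cycleFixedPoints k (σ n) :=
    hpres _ (realizable_cycleFixedPoints k)
  intro n
  induction n using Nat.strong_induction_on with
  | _ n ih =>
    intro hn
    obtain ⟨m, hm, hmn, hσm⟩ := exists_dvd_apply_eq hpos hσ (hsurj n hn)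
    rcases (Nat.le_of_dvd hn hmn).lt_or_eq with hlt | rfl
    · exact absurd ((ih m hlt hm).symm.trans hσm) hlt.ne
    · exact hσm
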